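/- For every real p > 4 there exists a constant C_p > 0 such that for all 0 ≤ s ≤ t and every x ∈ [0,1], ( ∫_s^t ( ∫₀¹ G_{t−r}(x,z)² dz )^{p/(p−2)} dr )^{(p−2)/2} ≤ C_p |t−s|^{(p−4)/4}. -/

import Mathlib

/-!
By orthogonality of the functions `sin (nπ·)` on `[0,1]`, Parseval gives
`∫₀¹ G_τ(x,z)² dz = ∑ 2 e^{-2π²n²τ} sin²(nπx) ≤ ∑ 2 e^{-2π²n²τ}`, and comparing the sum with a
Gaussian integral bounds this by `(2πτ)^{-1/2} ≤ τ^{-1/2}` (`integral_G_sq_le`). With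
`q = p/(p-2)`, the outer integral is then at most `∫₀^{t-s} u^{-q/2} du`, which converges because
`q < 2` exactly when `p > 4`; its value is `(t-s)^{1-q/2}/(1-q/2)`, and
`(1 - q/2) (p-2)/2 = (p-4)/4`.

Only the upper bound in Parseval is needed; it comes from the finite orthogonality computation on partial sums followed by
dominated convergence, the series being dominated by the summable Gaussian weights.
-/

open Real MeasureTheory Set

/-- The Dirichlet heat kernel on `[0,1]`:
`G t x y = ∑_{n=1}^∞ 2 e^{−π²n²t} sin(nπx) sin(nπy)` for `t > 0`, and `0` for `t ≤ 0`. -/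
noncomputable def G (t x y : ℝ) : ℝ :=
  if 0 < t then
    ∑' n : ℕ, 2 * Real.exp (-(Real.pi ^ 2) * ((n : ℝ) + 1) ^ 2 * t)
      * Real.sin (((n : ℝ) + 1) * Real.pi * x) * Real.sin (((n : ℝ) + 1) * Real.pi * y)
  else 0

lemma sum_gaussian_le {c : ℝ} (hc : 0 < c) (N : ℕ) :
    ∑ n ∈ Finset.range N, Real.exp (-c * ((n : ℝ) + 1) ^ 2) ≤ √(π / c) / 2 := by
  have hanti : AntitoneOn (fun u : ℝ => Real.exp (-c * u ^ 2)) (Icc (0 : ℝ) (0 + N)) := by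
    intro u hu v _ huv
    have h1 : u ^ 2 ≤ v ^ 2 := pow_le_pow_left₀ hu.1 huv 2
    exact Real.exp_le_exp.2 (by nlinarith)
  have h := hanti.sum_le_integral
  simp only [zero_add, Nat.cast_add, Nat.cast_one] at h
  refine h.trans ?_
  rw [← integral_gaussian_Ioi c, intervalIntegral.integral_of_le (Nat.cast_nonneg N)]
  exact setIntegral_mono_set (integrable_exp_neg_mul_sq hc).integrableOn
    (Filter.Eventually.of_forall fun _ => (Real.exp_pos _).le)
    (Filter.Eventually.of_forall fun u hu => hu.1)

lemma summable_gaussian {c : ℝ} (hc : 0 < c) :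
    Summable fun n : ℕ => Real.exp (-c * ((n : ℝ) + 1) ^ 2) :=
  summable_of_sum_range_le (fun _ => (Real.exp_pos _).le) (sum_gaussian_le hc)

lemma integral_cos_int_mul_pi {k : ℤ} (hk : k ≠ 0) :
    ∫ z in (0 : ℝ)..1, Real.cos ((k : ℝ) * π * z) = 0 := by
  have hk' : (k : ℝ) * π ≠ 0 := mul_ne_zero (Int.cast_ne_zero.2 hk) Real.pi_ne_zero
  rw [intervalIntegral.integral_comp_mul_left (fun u => Real.cos u) hk']
  simp [integral_cos, Real.sin_int_mul_pi]

lemma integral_sin_mul_sin (n m : ℕ) :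
    ∫ z in (0 : ℝ)..1, Real.sin (((n : ℝ) + 1) * π * z) * Real.sin (((m : ℝ) + 1) * π * z)
      = if n = m then 1 / 2 else 0 := by
  have hprod : ∀ z : ℝ,
      Real.sin (((n : ℝ) + 1) * π * z) * Real.sin (((m : ℝ) + 1) * π * z)
        = (Real.cos ((((n : ℤ) - m : ℤ) : ℝ) * π * z)
          - Real.cos ((((n : ℤ) + m + 2 : ℤ) : ℝ) * π * z)) / 2 := by
    intro z
    have e1 : (((n : ℤ) - m : ℤ) : ℝ) * π * z
        = ((n : ℝ) + 1) * π * z - ((m : ℝ) + 1) * π * z := by push_cast; ring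
    have e2 : (((n : ℤ) + m + 2 : ℤ) : ℝ) * π * z
        = ((n : ℝ) + 1) * π * z + ((m : ℝ) + 1) * π * z := by push_cast; ring
    rw [e1, e2, Real.cos_sub, Real.cos_add]
    ring
  simp_rw [hprod]
  rw [intervalIntegral.integral_div, intervalIntegral.integral_sub
    (Continuous.intervalIntegrable (by fun_prop) _ _)
    (Continuous.intervalIntegrable (by fun_prop) _ _),
    integral_cos_int_mul_pi (k := (n : ℤ) + m + 2) (by omega)]
  split_ifs with h
  · subst h; simp
  · rw [integral_cos_int_mul_pi (k := (n : ℤ) - m) (by omega)]; simp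

lemma integral_sq_sin_sum (a : ℕ → ℝ) (N : ℕ) :
    ∫ z in (0 : ℝ)..1, (∑ n ∈ Finset.range N, a n * Real.sin (((n : ℝ) + 1) * π * z)) ^ 2
      = ∑ n ∈ Finset.range N, a n ^ 2 / 2 := by
  have hexp : ∀ z : ℝ, (∑ n ∈ Finset.range N, a n * Real.sin (((n : ℝ) + 1) * π * z)) ^ 2
      = ∑ n ∈ Finset.range N, ∑ m ∈ Finset.range N, (a n * a m) *
        (Real.sin (((n : ℝ) + 1) * π * z) * Real.sin (((m : ℝ) + 1) * π * z)) := by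
    intro z
    rw [sq, Finset.sum_mul_sum]
    exact Finset.sum_congr rfl fun n _ => Finset.sum_congr rfl fun m _ => by ring
  simp_rw [hexp]
  rw [intervalIntegral.integral_finsetSum fun n _ =>
    Continuous.intervalIntegrable (by fun_prop) _ _]
  refine Finset.sum_congr rfl fun n hn => ?_
  rw [intervalIntegral.integral_finsetSum fun m _ =>
    Continuous.intervalIntegrable (by fun_prop) _ _]
  simp_rw [intervalIntegral.integral_const_mul, integral_sin_mul_sin]
  rw [Finset.sum_eq_single n (fun m _ hm => by simp [hm.symm]) (fun h => absurd hn h)]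
  simp; ring

/-- Bessel-type bound for an absolutely summable sine series: a bound on the partial sums of the
squared coefficients passes to the `L²` norm of the full series by dominated convergence. -/
lemma integral_sq_sin_tsum_le {a : ℕ → ℝ} (ha : Summable fun n => |a n|) {B : ℝ}
    (hB : ∀ N, ∑ n ∈ Finset.range N, a n ^ 2 / 2 ≤ B) :
    ∫ z in (0 : ℝ)..1, (∑' n : ℕ, a n * Real.sin (((n : ℝ) + 1) * π * z)) ^ 2 ≤ B := by
  have hterm : ∀ (z : ℝ) (n : ℕ), |a n * Real.sin (((n : ℝ) + 1) * π * z)| ≤ |a n| := by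
    intro z n
    rw [abs_mul]
    exact mul_le_of_le_one_right (abs_nonneg _) (Real.abs_sin_le_one _)
  have hsum : ∀ z : ℝ, Summable fun n : ℕ => a n * Real.sin (((n : ℝ) + 1) * π * z) :=
    fun z => Summable.of_norm_bounded ha (hterm z)
  have hlim : Filter.Tendsto (fun N : ℕ => ∫ z in (0 : ℝ)..1,
      (∑ n ∈ Finset.range N, a n * Real.sin (((n : ℝ) + 1) * π * z)) ^ 2) Filter.atTop
      (nhds (∫ z in (0 : ℝ)..1, (∑' n : ℕ, a n * Real.sin (((n : ℝ) + 1) * π * z)) ^ 2)) := by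
    refine intervalIntegral.tendsto_integral_filter_of_dominated_convergence
      (fun _ => (∑' n, |a n|) ^ 2) ?_ ?_ (by simp) ?_
    · exact Filter.Eventually.of_forall fun N => Continuous.aestronglyMeasurable (by fun_prop)
    · refine Filter.Eventually.of_forall fun N => Filter.Eventually.of_forall fun z _ => ?_
      rw [Real.norm_eq_abs, abs_pow]
      refine pow_le_pow_left₀ (abs_nonneg _) ?_ 2
      exact (Finset.abs_sum_le_sum_abs _ _).trans
        ((Finset.sum_le_sum fun n _ => hterm z n).trans
          (ha.sum_le_tsum _ fun n _ => abs_nonneg _))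
    · exact Filter.Eventually.of_forall fun z _ => ((hsum z).hasSum.tendsto_sum_nat).pow 2
  refine le_of_tendsto hlim (Filter.Eventually.of_forall fun N => ?_)
  rw [integral_sq_sin_sum]
  exact hB N

/-- The on-diagonal bound: `∫₀¹ G_τ(x,z)² dz` is at most `τ^{-1/2}`, uniformly in `x`. -/
lemma integral_G_sq_le {τ : ℝ} (hτ : 0 < τ) (x : ℝ) :
    ∫ z in Icc (0 : ℝ) 1, (G τ x z) ^ 2 ≤ τ ^ (-(1 / 2) : ℝ) := by
  rw [integral_Icc_eq_integral_Ioc, ← intervalIntegral.integral_of_le zero_le_one]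
  simp only [G, if_pos hτ]
  have hpi := Real.pi_pos
  have hc : 0 < π ^ 2 * τ := by positivity
  refine integral_sq_sin_tsum_le (a := fun n : ℕ =>
    2 * Real.exp (-(π ^ 2) * ((n : ℝ) + 1) ^ 2 * τ) * Real.sin (((n : ℝ) + 1) * π * x)) ?_ ?_
  · refine Summable.of_nonneg_of_le (fun _ => abs_nonneg _) (fun n => ?_)
      ((summable_gaussian hc).mul_left 2)
    rw [abs_mul, abs_of_pos (by positivity)]
    refine (mul_le_of_le_one_right (by positivity) (Real.abs_sin_le_one _)).trans (le_of_eq ?_)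
    ring_nf
  · intro N
    calc _ ≤ ∑ n ∈ Finset.range N, 2 * Real.exp (-(2 * (π ^ 2 * τ)) * ((n : ℝ) + 1) ^ 2) := by
          refine Finset.sum_le_sum fun n _ => ?_
          have he : Real.exp (-(2 * (π ^ 2 * τ)) * ((n : ℝ) + 1) ^ 2)
              = Real.exp (-(π ^ 2) * ((n : ℝ) + 1) ^ 2 * τ) ^ 2 := by
            rw [← Real.exp_nat_mul]; congr 1; push_cast; ring
          rw [he]
          have := Real.sin_sq_le_one (((n : ℝ) + 1) * π * x)
          have h2 := mul_le_mul_of_nonneg_left this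
            (sq_nonneg (Real.exp (-(π ^ 2) * ((n : ℝ) + 1) ^ 2 * τ)))
          simp only [mul_pow]
          linarith
      _ ≤ 2 * (√(π / (2 * (π ^ 2 * τ))) / 2) := by
          rw [← Finset.mul_sum]
          exact mul_le_mul_of_nonneg_left (sum_gaussian_le (by positivity) N) zero_le_two
      _ ≤ τ ^ (-(1 / 2) : ℝ) := by
          rw [Real.rpow_neg hτ.le, ← Real.sqrt_eq_rpow, ← Real.sqrt_inv,
            mul_div_cancel₀ _ (two_ne_zero)]
          refine Real.sqrt_le_sqrt ?_
          rw [← one_div, div_le_div_iff₀ (by positivity) hτ]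
          have : 3 < π := Real.pi_gt_three
          nlinarith [mul_pos hpi hτ]

/-- For every `p > 4` there is `C_p > 0` such that for all `0 ≤ s ≤ t` and `x ∈ [0,1]`,
`(∫_s^t (∫₀¹ G_{t−r}(x,z)² dz)^{p/(p−2)} dr)^{(p−2)/2} ≤ C_p |t−s|^{(p−4)/4}`. -/
theorem kernel_Lp_tail_bound (p : ℝ) (hp : 4 < p) :
    ∃ C : ℝ, 0 < C ∧ ∀ s t x : ℝ, 0 ≤ s → s ≤ t → x ∈ Set.Icc (0 : ℝ) 1 →
      (∫ r in Set.Icc s t,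
          (∫ z in Set.Icc (0 : ℝ) 1, (G (t - r) x z) ^ 2) ^ (p / (p - 2))) ^ ((p - 2) / 2)
        ≤ C * |t - s| ^ ((p - 4) / 4) := by
  have hp2 : 0 < p - 2 := by linarith
  set q := p / (p - 2) with hq
  have hq0 : 0 < q := by positivity
  have hq2 : q < 2 := by rw [hq, div_lt_iff₀ hp2]; linarith
  have hd : 0 < 1 - q / 2 := by linarith
  refine ⟨(1 - q / 2)⁻¹ ^ ((p - 2) / 2), by positivity, fun s t x _ hst _ => ?_⟩
  have hI0 : ∀ r, 0 ≤ ∫ z in Icc (0 : ℝ) 1, (G (t - r) x z) ^ 2 :=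
    fun r => integral_nonneg fun z => sq_nonneg _
  have hint : IntervalIntegrable (fun r : ℝ => (t - r) ^ (-(q / 2))) volume s t := by
    have h := (intervalIntegral.intervalIntegrable_rpow' (a := t - s) (b := 0)
      (r := -(q / 2)) (by linarith)).comp_sub_left t
    simpa using h
  have hval : ∫ r in s..t, (t - r) ^ (-(q / 2)) = (1 - q / 2)⁻¹ * (t - s) ^ (1 - q / 2) := by
    rw [intervalIntegral.integral_comp_sub_left (fun u : ℝ => u ^ (-(q / 2))), sub_self,
      integral_rpow (Or.inl (by linarith)), neg_add_eq_sub, Real.zero_rpow hd.ne']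
    ring
  have hle : ∫ r in Icc s t, (∫ z in Icc (0 : ℝ) 1, (G (t - r) x z) ^ 2) ^ q
      ≤ (1 - q / 2)⁻¹ * (t - s) ^ (1 - q / 2) := by
    rw [← hval, intervalIntegral.integral_of_le hst, ← integral_Icc_eq_integral_Ioc]
    refine integral_mono_of_nonneg
      (Filter.Eventually.of_forall fun r => Real.rpow_nonneg (hI0 r) _)
      ((integrableOn_Icc_iff_integrableOn_Ioc).2
        ((intervalIntegrable_iff_integrableOn_Ioc_of_le hst).1 hint)) ?_
    refine (ae_restrict_mem measurableSet_Icc).mono fun r hr => ?_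
    rcases hr.2.eq_or_lt with rfl | hlt
    · -- at the endpoint `r = t` both sides vanish by convention
      simp [G, Real.zero_rpow hq0.ne', Real.zero_rpow (neg_ne_zero.2 (half_pos hq0).ne')]
    · have hτ : 0 < t - r := sub_pos.2 hlt
      refine (Real.rpow_le_rpow (hI0 r) (integral_G_sq_le hτ x) hq0.le).trans (le_of_eq ?_)
      rw [← Real.rpow_mul hτ.le]
      congr 1
      ring
  have hts : 0 ≤ t - s := sub_nonneg.2 hst
  refine (Real.rpow_le_rpow (integral_nonneg fun r => Real.rpow_nonneg (hI0 r) _) hle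
    (by positivity)).trans (le_of_eq ?_)
  rw [Real.mul_rpow (by positivity) (by positivity), ← Real.rpow_mul hts, abs_of_nonneg hts]
  congr 2
  rw [hq]
  field_simp
  ring
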